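/- Given an integer k ≥ 2 and a real d ≥ 2, there exist τ_0 = τ_0(k, d) > 0 and a positive integer L_0 = L_0(k, d) satisfying the following. Let 0 < τ < τ_0, let G be a strongly (k choose 2)-free τ-critical graph, and let 𝓐 = (A_i : 1 ≤ i ≤ t) be an equicardinal blockade in G of width |G|/t^d (each block has exactly |G|/t^d vertices) with |G|/t^{2d} ≤ W_G, of length t with L_0 ≤ t ≤ 2|G|^{1/d}, such that every vertex a of A = A_1 ∪ ... ∪ A_t has fewer than |G|/t^d neighbours in A. Then there exist a vertex b ∈ A, an integer t' ≥ t^{1/8}, and a (t', |G|/t^{2d+2})-comb ((a_j, A'_j) : 1 ≤ j ≤ t') in (E_b ∩ A, ¬E_b ∩ A) (where E_b is the set of neighbours of b and ¬E_b the set of non-neighbours of b) such that 𝓐' = (A'_j : 1 ≤ j ≤ t') is an equicardinal minor of 𝓐 of width at least |G|/t^{2d+2}. -/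

import Mathlib

/-- `(a 0, ..., a (k-1))` has the `(k choose 2)`-property over `X`: there are witnesses
`b i j ∈ X` (for `i < j`) adjacent to `a i` and `a j` and non-adjacent to every other `a m`. -/
def HasKC2Prop {V : Type} (G : SimpleGraph V) {k : ℕ} (a : Fin k → V) (X : Set V) : Prop :=
  ∃ b : Fin k → Fin k → V, ∀ i j : Fin k, i < j →
    b i j ∈ X ∧ G.Adj (b i j) (a i) ∧ G.Adj (b i j) (a j) ∧
    ∀ m : Fin k, m ≠ i → m ≠ j → ¬ G.Adj (b i j) (a m)

/-- A blockade: a sequence of pairwise disjoint nonempty sets of vertices. -/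
def IsBlockade {V : Type} {t : ℕ} (B : Fin t → Finset V) : Prop :=
  (∀ i, (B i).Nonempty) ∧ ∀ i j, i ≠ j → Disjoint (B i) (B j)

/-- The blockade `B` is rainbow `(k choose 2)`-free: there is no tuple of vertices
lying in pairwise distinct blocks with the `(k choose 2)`-property over the union
of the blocks. -/
def IsRainbowKC2Free {V : Type} (G : SimpleGraph V) {t : ℕ} (B : Fin t → Finset V)
    (k : ℕ) : Prop :=
  ¬ ∃ (a : Fin k → V) (f : Fin k → Fin t), Function.Injective f ∧
      (∀ i, a i ∈ B (f i)) ∧ HasKC2Prop G a {x | ∃ i, x ∈ B i}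

/-- `((a i, B i) : i < t')` is a `(t', k)`-comb in `(C, D)` (for disjoint `C`, `D`):
the `a i` are distinct vertices of `C`; the `B i` are pairwise disjoint subsets of `D`,
each of cardinality at least `k` and avoiding all the `a j`; each `a i` is adjacent to
every vertex of `B i` and has no neighbour in `B j` for `j ≠ i`. -/
def IsCombIn {V : Type} (G : SimpleGraph V) {t' : ℕ} (a : Fin t' → V)
    (B : Fin t' → Finset V) (k : ℝ) (C D : Set V) : Prop :=
  Disjoint C D ∧
  Function.Injective a ∧
  (∀ i, a i ∈ C) ∧
  (∀ i, (↑(B i) : Set V) ⊆ D) ∧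
  (∀ i j, i ≠ j → Disjoint (B i) (B j)) ∧
  (∀ i j, a i ∉ B j) ∧
  (∀ i, ∀ x ∈ B i, G.Adj (a i) x) ∧
  (∀ i j, i ≠ j → ∀ x ∈ B j, ¬ G.Adj (a i) x) ∧
  (∀ i, k ≤ ((B i).card : ℝ))

/-- The family of cographs: the smallest family of (finite) graphs containing every
one-vertex graph and closed under complement, disjoint union, and isomorphism. -/
inductive IsCograph : ∀ {V : Type}, SimpleGraph V → Prop
  | single : IsCograph (⊥ : SimpleGraph (Fin 1))
  | compl {V : Type} {G : SimpleGraph V} : IsCograph G → IsCograph Gᶜ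
  | disjUnion {V W : Type} {G : SimpleGraph V} {H : SimpleGraph W} :
      IsCograph G → IsCograph H → IsCograph (G ⊕g H)
  | iso {V W : Type} {G : SimpleGraph V} {H : SimpleGraph W} :
      G ≃g H → IsCograph G → IsCograph H


/-- A graph `G` is `τ`-critical if every induced cograph in `G` has size `< |G|^τ`,
while every nonempty proper induced subgraph `G'` of `G` contains an induced cograph
of size at least `|G'|^τ`. -/
def TauCritical {V : Type} [Fintype V] (τ : ℝ) (G : SimpleGraph V) : Prop :=
  (∀ S : Finset V, IsCograph (G.induce (↑S : Set V)) →
      (S.card : ℝ) < (Fintype.card V : ℝ) ^ τ) ∧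
  (∀ S : Finset V, S.Nonempty → S ≠ Finset.univ →
      ∃ T ⊆ S, IsCograph (G.induce (↑T : Set V)) ∧ (S.card : ℝ) ^ τ ≤ (T.card : ℝ))

/-- `G` is `(k choose 2)`-free: no `k`-tuple of distinct vertices has the
`(k choose 2)`-property over the whole vertex set. -/
def KC2Free {V : Type} (G : SimpleGraph V) (k : ℕ) : Prop :=
  ¬ ∃ a : Fin k → V, Function.Injective a ∧ HasKC2Prop G a Set.univ

/-- `G` is strongly `(k choose 2)`-free: both `G` and its complement are
`(k choose 2)`-free. -/
def StronglyKC2Free {V : Type} (G : SimpleGraph V) (k : ℕ) : Prop :=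
  KC2Free G k ∧ KC2Free Gᶜ k

/-- `((b i, B i) : i < s)` belongs to the family `𝓕_G`: for some vertex `a` it is an
`(s, |G|/s²)`-comb in `(E_a, ¬E_a)` and `(B i : i < s)` is an equicardinal blockade. -/
def MemFamilyF {V : Type} [Fintype V] (G : SimpleGraph V) {s : ℕ}
    (b : Fin s → V) (B : Fin s → Finset V) : Prop :=
  (∃ a : V, IsCombIn G b B ((Fintype.card V : ℝ) / (s : ℝ) ^ 2)
      (G.neighborSet a) {x | ¬ G.Adj a x}) ∧
  (∀ i j, (B i).card = (B j).card) ∧ (∀ i, (B i).Nonempty)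

open Classical in
/-- `W_G`: the minimal width of an equicardinal blockade `(B i : i < s)` extendable to
a member of `𝓕_G ∪ 𝓕_{Ḡ}`, if such a blockade exists; `|G|` otherwise. -/
noncomputable def WG {V : Type} [Fintype V] (G : SimpleGraph V) : ℕ :=
  if (∃ (w s : ℕ) (b : Fin s → V) (B : Fin s → Finset V),
      0 < s ∧ (MemFamilyF G b B ∨ MemFamilyF Gᶜ b B) ∧ ∀ i, (B i).card = w)
  then sInf {w : ℕ | ∃ (s : ℕ) (b : Fin s → V) (B : Fin s → Finset V),
      0 < s ∧ (MemFamilyF G b B ∨ MemFamilyF Gᶜ b B) ∧ ∀ i, (B i).card = w}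
  else Fintype.card V

section Combs

open Classical

/-- The neighbours of `x` inside `Y`. -/
noncomputable def nbrsIn {V : Type} (G : SimpleGraph V) (Y : Finset V) (x : V) : Finset V :=
  Y.filter fun y => G.Adj x y

/-- The vertices of `Y` whose only neighbour in `insert i S` is `i`. -/
noncomputable def privateNbrs {V : Type} (G : SimpleGraph V) (S Y : Finset V) (i : V) :
    Finset V :=
  Y.filter fun y => G.Adj i y ∧ ∀ j ∈ S, j ≠ i → ¬ G.Adj j y

lemma mem_privateNbrs {V : Type} {G : SimpleGraph V} {S Y : Finset V} {i y : V} :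
    y ∈ privateNbrs G S Y i ↔ y ∈ Y ∧ G.Adj i y ∧ ∀ j ∈ S, j ≠ i → ¬ G.Adj j y := by
  simp [privateNbrs]

lemma privateNbrs_mono {V : Type} {G : SimpleGraph V} {S S' Y Y' : Finset V} (hS : S ⊆ S')
    (hY : Y ⊆ Y') (i : V) : privateNbrs G S' Y i ⊆ privateNbrs G S Y' i := by
  intro y hy
  simp only [privateNbrs, Finset.mem_filter] at hy ⊢
  exact ⟨hY hy.1, hy.2.1, fun j hj => hy.2.2 j (hS hj)⟩

/-- A set of size at most three is met in exactly one point by at least an eighth of all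
subsets of a larger set. -/
lemma pow_card_le_card_unique_inter {α : Type} (I e : Finset α) (he : e ⊆ I)
    (hne : e.Nonempty) (h3 : e.card ≤ 3) :
    2 ^ I.card ≤ 8 * (I.powerset.filter fun S => ∃ i, S ∩ e = {i}).card := by
  obtain ⟨x, hx⟩ := hne
  have h1 : (I \ e).powerset.card ≤ (I.powerset.filter fun S => ∃ i, S ∩ e = {i}).card := by
    refine Finset.card_le_card_of_injOn (fun R => insert x R) ?_ ?_
    · intro R hR
      simp only [Finset.coe_powerset, Set.mem_preimage, Set.mem_powerset_iff,
        Finset.coe_subset] at hR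
      simp only [Finset.coe_filter, Finset.mem_powerset, Set.mem_ofPred_eq]
      refine ⟨Finset.insert_subset (he hx) (hR.trans Finset.sdiff_subset), x, ?_⟩
      ext z
      simp only [Finset.mem_inter, Finset.mem_insert, Finset.mem_singleton]
      constructor
      · rintro ⟨rfl | hz, hze⟩
        · rfl
        · exact absurd hze (Finset.mem_sdiff.1 (hR hz)).2
      · rintro rfl
        exact ⟨Or.inl rfl, hx⟩
    · intro R hR R' hR' h
      simp only [Finset.coe_powerset, Set.mem_preimage, Set.mem_powerset_iff,
        Finset.coe_subset] at hR hR'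
      have hxR : x ∉ R := fun h => (Finset.mem_sdiff.1 (hR h)).2 hx
      have hxR' : x ∉ R' := fun h => (Finset.mem_sdiff.1 (hR' h)).2 hx
      have := congrArg (fun s => Finset.erase s x) h
      simpa [Finset.erase_insert hxR, Finset.erase_insert hxR'] using this
  rw [Finset.card_powerset, Finset.card_sdiff_of_subset he] at h1
  have h2 : e.card ≤ I.card := Finset.card_le_card he
  calc 2 ^ I.card = 2 ^ e.card * 2 ^ (I.card - e.card) := by
        rw [← pow_add, Nat.add_sub_cancel' h2]
    _ ≤ 2 ^ 3 * 2 ^ (I.card - e.card) := by gcongr; norm_num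
    _ ≤ _ := by omega

/-- If `I` covers `Y`, the degrees from `I` to `Y` are at most `2β` and `Y` has at least
`β |I|` vertices, then a constant proportion of `I` has many private neighbours. -/
lemma exists_subset_privateNbrs {V : Type} (G : SimpleGraph V) (I Y : Finset V) (β : ℝ)
    (hβ : 0 < β) (hdeg : ∀ x ∈ I, ((nbrsIn G Y x).card : ℝ) ≤ 2 * β)
    (hcov : ∀ y ∈ Y, ∃ x ∈ I, G.Adj x y) (hcard : β * I.card ≤ Y.card) :
    ∃ S ⊆ I, (∀ i ∈ S, β / 32 ≤ ((privateNbrs G S Y i).card : ℝ)) ∧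
      (I.card : ℝ) ≤ 64 * S.card := by
  set e : V → Finset V := fun y => I.filter fun x => G.Adj x y with he
  set Y₃ := Y.filter fun y => (e y).card ≤ 3 with hY₃
  have hsum : (∑ y ∈ Y, ((e y).card : ℝ)) ≤ 2 * Y.card := by
    have h1 : (∑ x ∈ I, (nbrsIn G Y x).card) = ∑ y ∈ Y, (e y).card :=
      Finset.sum_card_bipartiteAbove_eq_sum_card_bipartiteBelow G.Adj
    have h2 : (∑ y ∈ Y, ((e y).card : ℝ)) = ∑ x ∈ I, ((nbrsIn G Y x).card : ℝ) := by
      exact_mod_cast h1.symm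
    rw [h2]
    calc _ ≤ ∑ x ∈ I, 2 * β := Finset.sum_le_sum hdeg
      _ = 2 * (β * I.card) := by rw [Finset.sum_const, nsmul_eq_mul]; ring
      _ ≤ _ := by linarith
  have hhalf : (Y.card : ℝ) ≤ 2 * Y₃.card := by
    have h1 : (∑ y ∈ Y, (4 - if (e y).card ≤ 3 then (4 : ℝ) else 0)) ≤
        ∑ y ∈ Y, ((e y).card : ℝ) := by
      refine Finset.sum_le_sum fun y _ => ?_
      split_ifs with h
      · simp
      · have : 4 ≤ (e y).card := by omega
        have : (4 : ℝ) ≤ (e y).card := by exact_mod_cast this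
        linarith
    rw [Finset.sum_sub_distrib, ← Finset.sum_filter, Finset.sum_const, Finset.sum_const,
      nsmul_eq_mul, nsmul_eq_mul] at h1
    linarith
  set F : Finset V → Finset V := fun S => Y₃.filter fun y => ∃ i, S ∩ e y = {i} with hF
  have hcount : (∑ _S ∈ I.powerset, (Y₃.card : ℝ) / 8) ≤
      ∑ S ∈ I.powerset, ((F S).card : ℝ) := by
    have h1 : (∑ S ∈ I.powerset, (F S).card) =
        ∑ y ∈ Y₃, (I.powerset.filter fun S => ∃ i, S ∩ e y = {i}).card :=
      Finset.sum_card_bipartiteAbove_eq_sum_card_bipartiteBelow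
        (fun S y => ∃ i, S ∩ e y = {i})
    have h2 : (∑ S ∈ I.powerset, ((F S).card : ℝ)) = ∑ y ∈ Y₃,
        ((I.powerset.filter fun S => ∃ i, S ∩ e y = {i}).card : ℝ) := by exact_mod_cast h1
    rw [h2, Finset.sum_const, Finset.card_powerset, nsmul_eq_mul]
    have h3 : ∑ y ∈ Y₃, ((2 : ℝ) ^ I.card / 8) ≤ ∑ y ∈ Y₃,
        ((I.powerset.filter fun S => ∃ i, S ∩ e y = {i}).card : ℝ) := by
      refine Finset.sum_le_sum fun y hy => ?_
      have hy' := Finset.mem_filter.1 hy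
      obtain ⟨x, hx, hxy⟩ := hcov y hy'.1
      have := pow_card_le_card_unique_inter I (e y) (Finset.filter_subset _ _)
        ⟨x, Finset.mem_filter.2 ⟨hx, hxy⟩⟩ hy'.2
      have h4 : (2 : ℝ) ^ I.card ≤
          8 * ((I.powerset.filter fun S => ∃ i, S ∩ e y = {i}).card : ℝ) := by
        exact_mod_cast this
      linarith
    rw [Finset.sum_const, nsmul_eq_mul] at h3
    push_cast
    linarith
  obtain ⟨S, hS, hSF⟩ := Finset.exists_le_of_sum_le ⟨∅, Finset.empty_mem_powerset I⟩ hcount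
  rw [Finset.mem_powerset] at hS
  have hFS : ((F S).card : ℝ) ≤ ∑ i ∈ S, ((privateNbrs G S Y i).card : ℝ) := by
    have h1 : F S ⊆ S.biUnion fun i => privateNbrs G S Y i := by
      intro y hy
      obtain ⟨hy3, i, hi⟩ := Finset.mem_filter.1 hy
      have hiS : i ∈ S ∩ e y := by rw [hi]; exact Finset.mem_singleton_self i
      rw [Finset.mem_inter] at hiS
      refine Finset.mem_biUnion.2 ⟨i, hiS.1, Finset.mem_filter.2
        ⟨(Finset.mem_filter.1 hy3).1, (Finset.mem_filter.1 hiS.2).2, fun j hj hji hadj => ?_⟩⟩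
      have : j ∈ S ∩ e y := Finset.mem_inter.2 ⟨hj, Finset.mem_filter.2 ⟨hS hj, hadj⟩⟩
      rw [hi, Finset.mem_singleton] at this
      exact hji this
    exact_mod_cast (Finset.card_le_card h1).trans Finset.card_biUnion_le
  refine ⟨S.filter fun i => β / 32 ≤ ((privateNbrs G S Y i).card : ℝ),
    (Finset.filter_subset _ _).trans hS, fun i hi => ?_, ?_⟩
  · refine (Finset.mem_filter.1 hi).2.trans ?_
    exact_mod_cast Finset.card_le_card
      (privateNbrs_mono (Finset.filter_subset _ _) subset_rfl i)
  · have h1 : ∑ i ∈ S, ((privateNbrs G S Y i).card : ℝ) ≤ ∑ i ∈ S,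
        ((if β / 32 ≤ ((privateNbrs G S Y i).card : ℝ) then 2 * β else 0) + β / 32) := by
      refine Finset.sum_le_sum fun i hi => ?_
      split_ifs with h
      · have h2 : (privateNbrs G S Y i).card ≤ (nbrsIn G Y i).card := by
          refine Finset.card_le_card fun y hy => ?_
          have := Finset.mem_filter.1 hy
          exact Finset.mem_filter.2 ⟨this.1, this.2.1⟩
        have h3 : ((privateNbrs G S Y i).card : ℝ) ≤ (nbrsIn G Y i).card := by
          exact_mod_cast h2
        have := hdeg i (hS hi)
        linarith
      · linarith
    rw [Finset.sum_add_distrib, ← Finset.sum_filter, Finset.sum_const, Finset.sum_const,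
      nsmul_eq_mul, nsmul_eq_mul] at h1
    have h2 : (S.card : ℝ) ≤ I.card := by exact_mod_cast Finset.card_le_card hS
    have h3 : (S.card : ℝ) * (β / 32) ≤ I.card * (β / 32) := by gcongr
    refine le_of_mul_le_mul_left ?_ hβ
    linarith

/-- One level of the comb construction: a maximal set expanding by a factor `β` yields a comb
of width `β / 32`, and removing what it covers lowers the degree bound from `2β` to `β`. -/
lemma exists_comb_and_sparse_remainder {V : Type} (G : SimpleGraph V) (X Y : Finset V) (β : ℝ)
    (hβ : 0 < β) (hdeg : ∀ x ∈ X, ((nbrsIn G Y x).card : ℝ) ≤ 2 * β) :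
    ∃ I ⊆ X, ∃ Y' ⊆ Y, (∀ x ∈ X, ((nbrsIn G Y' x).card : ℝ) ≤ β) ∧
      (∀ i ∈ I, β / 32 ≤ ((privateNbrs G I Y i).card : ℝ)) ∧
      (Y.card : ℝ) ≤ Y'.card + 128 * β * I.card := by
  set C : Finset V → Finset V := fun I => I.biUnion fun x => nbrsIn G Y x with hC
  have hCY : ∀ I, C I ⊆ Y := fun I => Finset.biUnion_subset.2 fun x _ =>
    Finset.filter_subset _ _
  obtain ⟨I, hI, hmax⟩ := (X.powerset.filter fun I => β * I.card ≤ (C I).card).exists_max_image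
    Finset.card ⟨∅, by simp⟩
  rw [Finset.mem_filter, Finset.mem_powerset] at hI
  obtain ⟨S, hSI, hSpriv, hScard⟩ := exists_subset_privateNbrs G I (C I) β hβ
    (fun x hx => le_trans (by
      exact_mod_cast Finset.card_le_card (Finset.filter_subset_filter _ (hCY I)))
      (hdeg x (hI.1 hx)))
    (fun y hy => by
      obtain ⟨x, hx, hxy⟩ := Finset.mem_biUnion.1 hy
      exact ⟨x, hx, (Finset.mem_filter.1 hxy).2⟩) hI.2
  refine ⟨S, hSI.trans hI.1, Y \ C I, Finset.sdiff_subset, fun x hx => ?_, fun i hi => ?_, ?_⟩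
  · by_contra! hlt
    have hxI : x ∉ I := by
      intro hxI
      have : nbrsIn G (Y \ C I) x = ∅ := by
        refine Finset.filter_eq_empty_iff.2 fun y hy hadj => ?_
        rw [Finset.mem_sdiff] at hy
        exact hy.2 (Finset.mem_biUnion.2 ⟨x, hxI, Finset.mem_filter.2 ⟨hy.1, hadj⟩⟩)
      rw [this] at hlt
      simp at hlt
      linarith
    have h1 : C I ∪ nbrsIn G (Y \ C I) x ⊆ C (insert x I) := by
      intro y hy
      rw [Finset.mem_union] at hy
      rcases hy with hy | hy
      · obtain ⟨z, hz, hzy⟩ := Finset.mem_biUnion.1 hy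
        exact Finset.mem_biUnion.2 ⟨z, Finset.mem_insert_of_mem hz, hzy⟩
      · have := Finset.mem_filter.1 hy
        exact Finset.mem_biUnion.2 ⟨x, Finset.mem_insert_self _ _,
          Finset.mem_filter.2 ⟨(Finset.mem_sdiff.1 this.1).1, this.2⟩⟩
    have h2 : Disjoint (C I) (nbrsIn G (Y \ C I) x) :=
      Finset.disjoint_of_subset_right (Finset.filter_subset _ _) Finset.disjoint_sdiff
    have h3 := Finset.card_le_card h1
    rw [Finset.card_union_of_disjoint h2] at h3
    have h4 : ((C I).card : ℝ) + (nbrsIn G (Y \ C I) x).card ≤ (C (insert x I)).card := by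
      exact_mod_cast h3
    have h5 := hmax (insert x I) (by
      rw [Finset.mem_filter, Finset.mem_powerset, Finset.card_insert_of_notMem hxI]
      refine ⟨Finset.insert_subset hx hI.1, ?_⟩
      push_cast
      linarith [hI.2])
    rw [Finset.card_insert_of_notMem hxI] at h5
    omega
  · refine (hSpriv i hi).trans ?_
    exact_mod_cast Finset.card_le_card (privateNbrs_mono subset_rfl (hCY I) i)
  · have h1 : ((C I).card : ℝ) ≤ I.card * (2 * β) := by
      have h2 : ((C I).card : ℝ) ≤ ∑ x ∈ I, ((nbrsIn G Y x).card : ℝ) := by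
        exact_mod_cast Finset.card_biUnion_le
      refine h2.trans ?_
      rw [← nsmul_eq_mul, ← Finset.sum_const]
      exact Finset.sum_le_sum fun x hx => hdeg x (hI.1 hx)
    have h2 : ((Y \ C I).card : ℝ) + (C I).card = Y.card := by
      exact_mod_cast Finset.card_sdiff_add_card_eq_card (hCY I)
    nlinarith

/-- Multiscale comb lemma: if `X` covers `Y` with degrees at most `Δ`, then at some dyadic
scale `Δ / 2 ^ l` there is a comb using almost all of `Y`. -/
lemma exists_comb_of_cover {V : Type} (G : SimpleGraph V) (X Y : Finset V) (Δ ρ : ℝ)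
    (hΔ : 0 < Δ) (hρ : 0 < ρ)
    (hdeg : ∀ x ∈ X, ((nbrsIn G Y x).card : ℝ) ≤ Δ)
    (hcov : ∀ y ∈ Y, ∃ x ∈ X, G.Adj x y) (hY : Y.Nonempty) :
    ∃ (l : ℕ), ∃ I ⊆ X, 1 ≤ Δ / 2 ^ l ∧
      (∀ i ∈ I, Δ / (64 * 2 ^ l) ≤ ((privateNbrs G I Y i).card : ℝ)) ∧
      (1 - ρ) * ρ ^ l * Y.card ≤ 64 * (Δ / 2 ^ l) * I.card := by
  by_contra! hbad
  have key : ∀ l : ℕ, (∀ j < l, 1 ≤ Δ / 2 ^ j) → ∃ Y' ⊆ Y,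
      (∀ x ∈ X, ((nbrsIn G Y' x).card : ℝ) ≤ Δ / 2 ^ l) ∧
      ρ ^ l * Y.card ≤ Y'.card := by
    intro l
    induction l with
    | zero => exact fun _ => ⟨Y, subset_rfl, by simpa using hdeg, by simp⟩
    | succ l ih =>
      intro hl
      obtain ⟨Y', hY', hdeg', hcard'⟩ := ih fun j hj => hl j (by omega)
      obtain ⟨I, hIX, Y'', hY'', hdeg'', hpriv, hcard''⟩ :=
        exists_comb_and_sparse_remainder G X Y' (Δ / 2 ^ (l + 1)) (by positivity) (by
          intro x hx
          refine (hdeg' x hx).trans (le_of_eq ?_)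
          rw [pow_succ]; field_simp)
      refine ⟨Y'', hY''.trans hY', hdeg'', ?_⟩
      have := hbad l I hIX (hl l (by omega)) (by
        intro i hi
        have h1 := hpriv i hi
        have h2 : Δ / (64 * 2 ^ l) = Δ / 2 ^ (l + 1) / 32 := by
          rw [pow_succ]; field_simp; norm_num
        rw [h2]
        refine h1.trans ?_
        exact_mod_cast Finset.card_le_card (privateNbrs_mono subset_rfl hY' i))
      have h3 : 128 * (Δ / 2 ^ (l + 1)) * (I.card : ℝ) = 64 * (Δ / 2 ^ l) * I.card := by
        rw [pow_succ]; field_simp; ring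
      rw [h3] at hcard''
      rw [pow_succ]
      nlinarith
  have hex : ∃ l : ℕ, Δ / 2 ^ l < 1 := by
    obtain ⟨l, hl⟩ := pow_unbounded_of_one_lt Δ (one_lt_two)
    exact ⟨l, by rw [div_lt_one (by positivity)]; exact hl⟩
  obtain ⟨Y', hY', hdeg', hcard'⟩ := key (Nat.find hex) fun j hj => by
    have := Nat.find_min hex hj
    linarith
  have hYpos : (0 : ℝ) < Y.card := by exact_mod_cast hY.card_pos
  have hY'pos : (0 : ℝ) < Y'.card := lt_of_lt_of_le (by positivity) hcard'
  obtain ⟨y, hy⟩ := Finset.card_pos.1 (by exact_mod_cast hY'pos)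
  obtain ⟨x, hx, hxy⟩ := hcov y (hY' hy)
  have h1 := (hdeg' x hx).trans_lt (Nat.find_spec hex)
  have h2 : (nbrsIn G Y' x).card < 1 := by exact_mod_cast h1
  have h3 : 0 < (nbrsIn G Y' x).card := Finset.card_pos.2 ⟨y, Finset.mem_filter.2 ⟨hy, hxy⟩⟩
  omega

/-- Removing vertices of high degree scale by scale, one reaches either a stable set or a
dyadic scale at which many vertices have nearly maximal degree. -/
lemma exists_stable_or_balanced {V : Type} (G : SimpleGraph V) (A : Finset V) (Δ κ σ : ℝ)
    (hσ : 0 < σ) (hσ1 : σ < 1) (hκ : 0 ≤ κ)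
    (hdeg : ∀ x ∈ A, ((nbrsIn G A x).card : ℝ) ≤ Δ) :
    (∃ A' ⊆ A, (∀ x ∈ A', ∀ y ∈ A', ¬ G.Adj x y) ∧
      (A.card : ℝ) - κ / (1 - σ) * A.card ≤ A'.card) ∨
    ∃ (l : ℕ), ∃ A' ⊆ A, 1 ≤ Δ / 2 ^ l ∧ (∀ x ∈ A', ((nbrsIn G A' x).card : ℝ) ≤ Δ / 2 ^ l) ∧
      κ * σ ^ l * A.card ≤
        ((A'.filter fun x => Δ / 2 ^ l / 2 < ((nbrsIn G A' x).card : ℝ)).card : ℝ) := by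
  rw [or_iff_not_imp_right]
  intro hbad
  push Not at hbad
  have key : ∀ l : ℕ, (∀ j < l, 1 ≤ Δ / 2 ^ j) → ∃ A' ⊆ A,
      (∀ x ∈ A', ((nbrsIn G A' x).card : ℝ) ≤ Δ / 2 ^ l) ∧
      (A.card : ℝ) - κ * ((1 - σ ^ l) / (1 - σ)) * A.card ≤ A'.card := by
    intro l
    induction l with
    | zero => exact fun _ => ⟨A, subset_rfl, by simpa using hdeg, by simp⟩
    | succ l ih =>
      intro hl
      obtain ⟨A', hA', hdeg', hcard'⟩ := ih fun j hj => hl j (by omega)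
      have h1 := hbad l A' hA' (hl l (by omega)) hdeg'
      set S := A'.filter fun x => Δ / 2 ^ l / 2 < ((nbrsIn G A' x).card : ℝ) with hS
      refine ⟨A' \ S, Finset.sdiff_subset.trans hA', fun x hx => ?_, ?_⟩
      · rw [Finset.mem_sdiff] at hx
        have h2 : ((nbrsIn G A' x).card : ℝ) ≤ Δ / 2 ^ l / 2 := by
          by_contra! h
          exact hx.2 (Finset.mem_filter.2 ⟨hx.1, h⟩)
        rw [pow_succ, ← div_div]
        refine le_trans ?_ h2
        exact_mod_cast Finset.card_le_card
          (Finset.filter_subset_filter _ Finset.sdiff_subset)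
      · have h2 : ((A' \ S).card : ℝ) + S.card = A'.card := by
          exact_mod_cast Finset.card_sdiff_add_card_eq_card (Finset.filter_subset _ _)
        have h3 : (1 - σ ^ (l + 1)) / (1 - σ) = (1 - σ ^ l) / (1 - σ) + σ ^ l := by
          have : (1 - σ) ≠ 0 := by linarith
          field_simp
          ring
        rw [h3]
        nlinarith
  have hex : ∃ l : ℕ, Δ / 2 ^ l < 1 := by
    obtain ⟨l, hl⟩ := pow_unbounded_of_one_lt Δ (one_lt_two)
    exact ⟨l, by rw [div_lt_one (by positivity)]; exact hl⟩
  obtain ⟨A', hA', hdeg', hcard'⟩ := key (Nat.find hex) fun j hj => by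
    have := Nat.find_min hex hj
    linarith
  refine ⟨A', hA', fun x hx y hy hxy => ?_, le_trans ?_ hcard'⟩
  · have h1 := (hdeg' x hx).trans_lt (Nat.find_spec hex)
    have h2 : (nbrsIn G A' x).card < 1 := by exact_mod_cast h1
    have h3 : 0 < (nbrsIn G A' x).card := Finset.card_pos.2 ⟨y, Finset.mem_filter.2 ⟨hy, hxy⟩⟩
    omega
  · have h1 : (1 - σ ^ Nat.find hex) / (1 - σ) ≤ 1 / (1 - σ) := by
      have : 0 < 1 - σ := by linarith
      have : 0 < σ ^ Nat.find hex := by positivity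
      gcongr
      linarith
    have h2 : κ * ((1 - σ ^ Nat.find hex) / (1 - σ)) ≤ κ / (1 - σ) := by
      rw [div_eq_mul_one_div κ]
      gcongr
    have : κ * ((1 - σ ^ Nat.find hex) / (1 - σ)) * A.card ≤ κ / (1 - σ) * A.card := by gcongr
    linarith

/-- The union of two disjoint anticomplete vertex sets induces the disjoint union of the
induced subgraphs. -/
lemma isCograph_induce_union {V : Type} {G : SimpleGraph V} {C D : Finset V}
    (hC : IsCograph (G.induce (↑C : Set V))) (hD : IsCograph (G.induce (↑D : Set V)))
    (hdisj : Disjoint C D) (hanti : ∀ x ∈ C, ∀ y ∈ D, ¬ G.Adj x y) :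
    IsCograph (G.induce (↑(C ∪ D) : Set V)) := by
  refine IsCograph.iso ?_ (IsCograph.disjUnion hC hD)
  have hd : Disjoint (↑C : Set V) (↑D : Set V) := Finset.disjoint_coe.2 hdisj
  set e := (Equiv.Set.union hd).symm.trans (Equiv.setCongr (Finset.coe_union C D).symm) with he
  have hl : ∀ x, ((e (Sum.inl x)) : V) = x := fun x => rfl
  have hr : ∀ x, ((e (Sum.inr x)) : V) = x := fun x => rfl
  refine ⟨e, ?_⟩
  rintro (⟨x, hx⟩ | ⟨x, hx⟩) (⟨y, hy⟩ | ⟨y, hy⟩)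
  · simp [hl]
  · simpa [hl, hr] using hanti x hx y hy
  · have := hanti y hy x hx
    rw [G.adj_comm] at this
    simpa [hl, hr] using this
  · simp [hr]

lemma isCograph_induce_singleton {V : Type} (G : SimpleGraph V) (v : V) :
    IsCograph (G.induce (↑({v} : Finset V) : Set V)) := by
  refine IsCograph.iso ?_ IsCograph.single
  have : Unique (↑(↑({v} : Finset V) : Set V)) :=
    ⟨⟨⟨v, by simp⟩⟩, fun x => Subtype.ext (by simpa using x.2)⟩
  refine ⟨Equiv.ofUnique _ _, ?_⟩
  intro a b
  rw [Subsingleton.elim a b]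
  simp

lemma isCograph_induce_of_stable {V : Type} {G : SimpleGraph V} {C : Finset V}
    (hne : C.Nonempty) (hC : ∀ x ∈ C, ∀ y ∈ C, ¬ G.Adj x y) :
    IsCograph (G.induce (↑C : Set V)) := by
  induction hne using Finset.Nonempty.cons_induction with
  | singleton a => exact isCograph_induce_singleton G a
  | cons a s ha hs ih =>
    rw [Finset.cons_eq_insert, Finset.insert_eq]
    refine isCograph_induce_union (isCograph_induce_singleton G a)
      (ih fun x hx y hy => hC x (by simp [hx]) y (by simp [hy])) (by simpa using ha) ?_
    intro x hx y hy
    exact hC x (by simp_all) y (by simp [hy])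

/-- The vertices reachable from `b` by a walk of length one or two inside `A`. -/
noncomputable def twoBall {V : Type} (G : SimpleGraph V) (A : Finset V) (b : V) : Finset V :=
  nbrsIn G A b ∪ (nbrsIn G A b).biUnion fun x => nbrsIn G A x

/-- In a critical graph a balanced sparse set contains a vertex with large second
neighbourhood: otherwise many neighbourhoods could be made mutually anticomplete. -/
lemma TauCritical.mul_rpow_lt_of_twoBall_le {V : Type} [Fintype V] {G : SimpleGraph V} {τ : ℝ}
    (hτ : 0 < τ) (hG : TauCritical τ G) (A S : Finset V) (Δ M : ℝ) (hΔ : 0 < Δ)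
    (hSA : S ⊆ A) (hdeg : ∀ x ∈ A, ((nbrsIn G A x).card : ℝ) ≤ Δ)
    (hS : ∀ x ∈ S, Δ / 2 < ((nbrsIn G A x).card : ℝ))
    (hball : ∀ x ∈ S, ((twoBall G A x).card : ℝ) ≤ M)
    (m : ℕ) (hm : 0 < m) (hmS : 4 * m * M ≤ S.card) (hM : 0 < M) :
    m * (Δ / 4) ^ τ < (Fintype.card V : ℝ) ^ τ := by
  have key : ∀ r ≤ m, ∃ C Z : Finset V, (C = ∅ ∨ IsCograph (G.induce (↑C : Set V))) ∧
      C ⊆ Z ∧ Z ⊆ A ∧ (∀ x ∈ C, nbrsIn G A x ⊆ Z) ∧ r * (Δ / 4) ^ τ ≤ (C.card : ℝ) ∧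
      (Z.card : ℝ) ≤ r * M := by
    intro r
    induction r with
    | zero => exact fun _ => ⟨∅, ∅, Or.inl rfl, by simp⟩
    | succ r ih =>
      intro hr
      obtain ⟨C, Z, hC, hCZ, hZA, hCnbr, hCcard, hZcard⟩ := ih (by omega)
      have hrm : (r : ℝ) + 1 ≤ m := by exact_mod_cast hr
      obtain ⟨b, hb, hbZ⟩ : ∃ b ∈ S, ((nbrsIn G Z b).card : ℝ) ≤ Δ / 4 := by
        by_contra! hlarge
        have h1 : (∑ b ∈ S, (nbrsIn G Z b).card) = ∑ z ∈ Z, (nbrsIn G S z).card := by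
          rw [show (∑ z ∈ Z, (nbrsIn G S z).card) = ∑ z ∈ Z, (S.filter fun b => G.Adj b z).card
            from Finset.sum_congr rfl fun z _ => by simp only [nbrsIn, G.adj_comm]]
          exact Finset.sum_card_bipartiteAbove_eq_sum_card_bipartiteBelow G.Adj
        have h2 : (∑ b ∈ S, ((nbrsIn G Z b).card : ℝ)) = ∑ z ∈ Z, ((nbrsIn G S z).card : ℝ) := by
          exact_mod_cast h1
        have h3 : (∑ z ∈ Z, ((nbrsIn G S z).card : ℝ)) ≤ Z.card * Δ := by
          rw [← nsmul_eq_mul, ← Finset.sum_const]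
          refine Finset.sum_le_sum fun z hz => le_trans ?_ (hdeg z (hZA hz))
          exact_mod_cast Finset.card_le_card (Finset.filter_subset_filter _ hSA)
        have h4 : (S.card : ℝ) * (Δ / 4) ≤ ∑ b ∈ S, ((nbrsIn G Z b).card : ℝ) := by
          rw [← nsmul_eq_mul, ← Finset.sum_const]
          exact Finset.sum_le_sum fun b hb => (hlarge b hb).le
        have h5 : (S.card : ℝ) ≤ 4 * Z.card := by
          refine le_of_mul_le_mul_right ?_ hΔ
          linarith
        nlinarith
      set W := nbrsIn G A b \ Z with hW
      have hWcard : Δ / 4 ≤ (W.card : ℝ) := by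
        have h1 : nbrsIn G A b ⊆ W ∪ nbrsIn G Z b := by
          intro y hy
          by_cases hyZ : y ∈ Z
          · exact Finset.mem_union_right _ (Finset.mem_filter.2 ⟨hyZ, (Finset.mem_filter.1 hy).2⟩)
          · exact Finset.mem_union_left _ (Finset.mem_sdiff.2 ⟨hy, hyZ⟩)
        have h2 : ((nbrsIn G A b).card : ℝ) ≤ W.card + (nbrsIn G Z b).card := by
          exact_mod_cast (Finset.card_le_card h1).trans (Finset.card_union_le _ _)
        have := hS b hb
        linarith
      have hWb : ∀ y ∈ W, y ∈ A ∧ G.Adj b y ∧ y ∉ Z := by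
        intro y hy
        rw [hW, Finset.mem_sdiff] at hy
        exact ⟨(Finset.mem_filter.1 hy.1).1, (Finset.mem_filter.1 hy.1).2, hy.2⟩
      have hWne : W.Nonempty := by
        rw [← Finset.card_pos]
        have : (0 : ℝ) < W.card := by linarith
        exact_mod_cast this
      obtain ⟨T, hTW, hT, hTcard⟩ := hG.2 W hWne (by
        intro h
        exact G.loopless.irrefl b (hWb b (h ▸ Finset.mem_univ b)).2.1)
      have hT' : (Δ / 4) ^ τ ≤ (T.card : ℝ) :=
        (Real.rpow_le_rpow (by positivity) hWcard hτ.le).trans hTcard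
      have hdisj : Disjoint C T := Finset.disjoint_left.2 fun x hxC hxT =>
        (hWb x (hTW hxT)).2.2 (hCZ hxC)
      have hbnbr : W ⊆ nbrsIn G A b := Finset.sdiff_subset
      refine ⟨C ∪ T, Z ∪ twoBall G A b, Or.inr ?_, ?_, ?_, ?_, ?_, ?_⟩
      · rcases hC with rfl | hC
        · rwa [Finset.empty_union]
        · refine isCograph_induce_union hC hT hdisj fun x hx y hy hxy => ?_
          have := hWb y (hTW hy)
          exact this.2.2 (hCnbr x hx (Finset.mem_filter.2 ⟨this.1, hxy⟩))
      · exact Finset.union_subset_union hCZ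
          ((hTW.trans hbnbr).trans Finset.subset_union_left)
      · refine Finset.union_subset hZA (Finset.union_subset (Finset.filter_subset _ _) ?_)
        exact Finset.biUnion_subset.2 fun _ _ => Finset.filter_subset _ _
      · intro x hx
        rcases Finset.mem_union.1 hx with hx | hx
        · exact (hCnbr x hx).trans Finset.subset_union_left
        · refine Finset.Subset.trans ?_ Finset.subset_union_right
          refine Finset.Subset.trans ?_ Finset.subset_union_right
          exact Finset.subset_biUnion_of_mem (fun x => nbrsIn G A x) (hbnbr (hTW hx))
      · rw [Finset.card_union_of_disjoint hdisj]
        push_cast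
        linarith
      · have h1 : ((Z ∪ twoBall G A b).card : ℝ) ≤ Z.card + (twoBall G A b).card := by
          exact_mod_cast Finset.card_union_le _ _
        have := hball b hb
        push_cast
        linarith
  obtain ⟨C, Z, hC, -, -, -, hcard, -⟩ := key m le_rfl
  refine hcard.trans_lt ?_
  rcases hC with rfl | hC
  · have h1 : (0 : ℝ) < m * (Δ / 4) ^ τ := by positivity
    simp at hcard
    linarith
  · exact hG.1 C hC

/-- A comb given by private neighbourhoods bounds `W_G` from above. -/
lemma WG_le_of_comb {V : Type} [Fintype V] [Nonempty V] (G : SimpleGraph V) (b : V)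
    (I Y : Finset V) (hI : I.Nonempty) (hIb : ∀ i ∈ I, G.Adj b i) (hYb : ∀ y ∈ Y, ¬ G.Adj b y)
    (hpriv : ∀ i ∈ I, (Fintype.card V : ℝ) / (I.card : ℝ) ^ 2 ≤
      ((privateNbrs G I Y i).card : ℝ)) :
    WG G ≤ ⌈(Fintype.card V : ℝ) / (I.card : ℝ) ^ 2⌉₊ := by
  set w := ⌈(Fintype.card V : ℝ) / (I.card : ℝ) ^ 2⌉₊ with hw
  have hpos : (0 : ℝ) < (Fintype.card V : ℝ) / (I.card : ℝ) ^ 2 := by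
    have : 0 < I.card := hI.card_pos
    have : 0 < Fintype.card V := Fintype.card_pos
    positivity
  have hsub : ∀ i ∈ I, ∃ B ⊆ privateNbrs G I Y i, B.card = w := fun i hi =>
    Finset.exists_subset_card_eq (Nat.ceil_le.2 (hpriv i hi))
  choose! B hB hBcard using hsub
  have hex : ∃ (s : ℕ) (b : Fin s → V) (B : Fin s → Finset V),
      0 < s ∧ (MemFamilyF G b B ∨ MemFamilyF Gᶜ b B) ∧ ∀ i, (B i).card = w := by
    set f : Fin I.card ≃ I := I.equivFin.symm with hf
    have hBm : ∀ i, ∀ y ∈ B (f i), y ∈ Y ∧ G.Adj (f i) y ∧ ∀ j ∈ I, j ≠ f i → ¬ G.Adj j y :=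
      fun i y hy => mem_privateNbrs.1 (hB _ (f i).2 hy)
    have hne : ∀ i j, i ≠ j → ((f i : V)) ≠ f j := fun i j hij h =>
      hij (f.injective (Subtype.ext h))
    refine ⟨I.card, fun i => f i, fun i => B (f i), hI.card_pos, Or.inl ⟨⟨b, ?_⟩, ?_, ?_⟩, ?_⟩
    · refine ⟨?_, ?_, ?_, ?_, ?_, ?_, ?_, ?_, ?_⟩
      · exact Set.disjoint_left.2 fun x hx hx' => hx' hx
      · exact fun i j h => f.injective (Subtype.ext h)
      · exact fun i => hIb _ (f i).2
      · exact fun i y hy => hYb y (hBm i y hy).1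
      · intro i j hij
        refine Finset.disjoint_left.2 fun y hy hy' => ?_
        exact (hBm j y hy').2.2 (f i) (f i).2 (hne i j hij) (hBm i y hy).2.1
      · exact fun i j h => hYb _ (hBm j _ h).1 (hIb _ (f i).2)
      · exact fun i y hy => (hBm i y hy).2.1
      · exact fun i j hij y hy => (hBm j y hy).2.2 (f i) (f i).2 (hne i j hij)
      · intro i
        rw [hBcard _ (f i).2]
        exact Nat.le_ceil _
    · intro i j
      rw [hBcard _ (f i).2, hBcard _ (f j).2]
    · intro i
      rw [← Finset.card_pos, hBcard _ (f i).2]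
      exact Nat.ceil_pos.2 hpos
    · exact fun i => hBcard _ (f i).2
  unfold WG
  rw [if_pos ⟨w, hex⟩]
  exact Nat.sInf_le hex

/-- Spreading a family of sets over distinct blocks: a maximal matching between the rows `i ∈ I`
and the blocks having large intersection with `B i` is large. -/
lemma exists_injOn_large_inter {V : Type} {t : ℕ} (A : Fin t → Finset V) (w : ℕ)
    (hA : ∀ j, (A j).card = w) (I : Finset V) (hI : I.Nonempty) (B : V → Finset V)
    (β : ℝ) (hβ : 0 < β)
    (hB : ∀ i ∈ I, β ≤ ((B i).card : ℝ)) (hBA : ∀ i ∈ I, ∀ y ∈ B i, ∃ j, y ∈ A j)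
    (hdisj : ∀ i ∈ I, ∀ i' ∈ I, i ≠ i' → Disjoint (B i) (B i')) :
    ∃ (J : Finset (Fin t)) (r : Fin t → V), Set.InjOn r J ∧ (∀ j ∈ J, r j ∈ I) ∧
      (∀ j ∈ J, β / (2 * t) ≤ ((B (r j) ∩ A j).card : ℝ)) ∧
      β * I.card ≤ (2 * w + β) * J.card := by
  obtain ⟨i₀, hi₀⟩ := hI
  obtain ⟨J, hJ, hmax⟩ := (Finset.univ.filter fun J : Finset (Fin t) =>
    ∃ r : Fin t → V, Set.InjOn r J ∧ (∀ j ∈ J, r j ∈ I) ∧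
      ∀ j ∈ J, β / (2 * t) ≤ ((B (r j) ∩ A j).card : ℝ)).exists_max_image Finset.card
    ⟨∅, Finset.mem_filter.2 ⟨Finset.mem_univ _, fun _ => i₀, by simp⟩⟩
  obtain ⟨r, hr, hrI, hrbig⟩ := (Finset.mem_filter.1 hJ).2
  refine ⟨J, r, hr, hrI, hrbig, ?_⟩
  have hsmall : ∀ i ∈ I \ J.image r, ∀ j ∉ J, ((B i ∩ A j).card : ℝ) < β / (2 * t) := by
    intro i hi j hj
    by_contra! hbig
    rw [Finset.mem_sdiff, Finset.mem_image] at hi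
    have hupd : ∀ j' ∈ J, Function.update r j i j' = r j' := fun j' hj' =>
      Function.update_of_ne (fun h : j' = j => hj (h ▸ hj')) _ _
    have := hmax (insert j J) (by
      refine Finset.mem_filter.2 ⟨Finset.mem_univ _, Function.update r j i, ?_, ?_, ?_⟩
      · rw [Finset.coe_insert, Set.injOn_insert (by simpa using hj)]
        refine ⟨fun a ha b hb h => hr ha hb ?_, ?_⟩
        · rwa [hupd a ha, hupd b hb] at h
        · rintro ⟨j', hj', h⟩
          rw [hupd j' hj', Function.update_self] at h
          exact hi.2 ⟨j', hj', h⟩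
      · intro j' hj'
        rcases Finset.mem_insert.1 hj' with rfl | hj'
        · simpa using hi.1
        · rw [hupd j' hj']
          exact hrI j' hj'
      · intro j' hj'
        rcases Finset.mem_insert.1 hj' with rfl | hj'
        · simpa using hbig
        · rw [hupd j' hj']
          exact hrbig j' hj')
    rw [Finset.card_insert_of_notMem hj] at this
    omega
  set R := I \ J.image r with hR
  have hrow : ∀ i ∈ R, β / 2 ≤ ∑ j ∈ J, ((B i ∩ A j).card : ℝ) := by
    intro i hi
    have hiI := (Finset.mem_sdiff.1 hi).1
    have h1 : B i ⊆ Finset.univ.biUnion fun j => B i ∩ A j := by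
      intro y hy
      obtain ⟨j, hj⟩ := hBA i hiI y hy
      exact Finset.mem_biUnion.2 ⟨j, Finset.mem_univ _, Finset.mem_inter.2 ⟨hy, hj⟩⟩
    have h2 : ((B i).card : ℝ) ≤ ∑ j, ((B i ∩ A j).card : ℝ) := by
      exact_mod_cast (Finset.card_le_card h1).trans Finset.card_biUnion_le
    rw [← Finset.sum_add_sum_compl J] at h2
    have h3 : ∑ j ∈ Jᶜ, ((B i ∩ A j).card : ℝ) ≤ ∑ j ∈ Jᶜ, β / (2 * t) :=
      Finset.sum_le_sum fun j hj => (hsmall i hi j (Finset.mem_compl.1 hj)).le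
    rw [Finset.sum_const, nsmul_eq_mul] at h3
    have h4 : ((Jᶜ).card : ℝ) ≤ t := by
      have := Finset.card_le_univ (Jᶜ)
      rw [Fintype.card_fin] at this
      exact_mod_cast this
    have h5 : ((Jᶜ).card : ℝ) * (β / (2 * t)) ≤ β / 2 := by
      rcases Nat.eq_zero_or_pos t with h0 | hpos
      · have : (t : ℝ) = 0 := by exact_mod_cast h0
        rw [this]; simp; positivity
      · have : (0 : ℝ) < t := by exact_mod_cast hpos
        calc _ ≤ (t : ℝ) * (β / (2 * t)) := by gcongr
          _ = β / 2 := by field_simp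
    have := hB i hiI
    linarith
  have hcol : ∀ j, ∑ i ∈ R, ((B i ∩ A j).card : ℝ) ≤ w := by
    intro j
    have h1 : (R.biUnion fun i => B i ∩ A j) ⊆ A j :=
      Finset.biUnion_subset.2 fun _ _ => Finset.inter_subset_right
    have h2 := Finset.card_le_card h1
    rw [Finset.card_biUnion, hA] at h2
    · exact_mod_cast h2
    · intro i hi i' hi' hne
      exact (hdisj i (Finset.mem_sdiff.1 hi).1 i' (Finset.mem_sdiff.1 hi').1 hne).mono
        Finset.inter_subset_left Finset.inter_subset_left
  have h1 : (R.card : ℝ) * (β / 2) ≤ J.card * w := by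
    calc (R.card : ℝ) * (β / 2) = ∑ i ∈ R, β / 2 := by rw [Finset.sum_const, nsmul_eq_mul]
      _ ≤ ∑ i ∈ R, ∑ j ∈ J, ((B i ∩ A j).card : ℝ) := Finset.sum_le_sum hrow
      _ = ∑ j ∈ J, ∑ i ∈ R, ((B i ∩ A j).card : ℝ) := Finset.sum_comm
      _ ≤ ∑ j ∈ J, (w : ℝ) := Finset.sum_le_sum fun j _ => hcol j
      _ = _ := by rw [Finset.sum_const, nsmul_eq_mul]
  have h2 : (I.card : ℝ) ≤ R.card + J.card := by
    have h3 : I ⊆ R ∪ J.image r := by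
      intro i hi
      by_cases h : i ∈ J.image r
      · exact Finset.mem_union_right _ h
      · exact Finset.mem_union_left _ (Finset.mem_sdiff.2 ⟨hi, h⟩)
    have h4 := (Finset.card_le_card h3).trans (Finset.card_union_le _ _)
    have h5 := h4.trans (Nat.add_le_add_left Finset.card_image_le _)
    exact_mod_cast h5
  nlinarith

set_option maxHeartbeats 800000 in
/-- A sparse set in a critical graph contains a comb inside the first two neighbourhoods of one
of its vertices; `U` measures the width `t * w / U` of the comb. -/
lemma TauCritical.exists_large_comb {V : Type} [Fintype V] {G : SimpleGraph V} {τ : ℝ}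
    (hτ : 0 < τ) (hG : TauCritical τ G) (d η t w : ℝ) (hd : 2 ≤ d) (hη : 0 < η)
    (hη4 : η ≤ 1 / 4) (hτη : d * τ ≤ η / 2) (ht : 16 ≤ t) (htη : 32 ≤ t ^ (η / 2))
    (htσ : 2 / (1 - (2 : ℝ) ^ (-η)) ≤ t ^ η) (hw : 1 ≤ w)
    (hn : (Fintype.card V : ℝ) = t ^ d * w) (A : Finset V) (hA : (A.card : ℝ) = t * w)
    (hdeg : ∀ x ∈ A, ((nbrsIn G A x).card : ℝ) ≤ w) :
    ∃ b ∈ A, ∃ I ⊆ A, ∃ Y ⊆ A, ∃ U : ℝ, (∀ i ∈ I, G.Adj b i) ∧ (∀ y ∈ Y, ¬ G.Adj b y) ∧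
      t ≤ U ∧ U ≤ 64 * (t * w) ∧
      (∀ i ∈ I, t * w / U ≤ ((privateNbrs G I Y i).card : ℝ)) ∧
      (1 - (2 : ℝ) ^ (-η)) / 8192 * U ^ (1 - 2 * η) ≤ I.card := by
  have ht0 : 0 < t := by linarith
  have hσ0 : (0 : ℝ) < (2 : ℝ) ^ (-η) := by positivity
  have hσ1 : (2 : ℝ) ^ (-η) < 1 := Real.rpow_lt_one_of_one_lt_of_neg one_lt_two (by linarith)
  set σ := (2 : ℝ) ^ (-η) with hσ
  have hτ1 : τ ≤ 1 := by nlinarith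
  rcases exists_stable_or_balanced G A w (t ^ (-η)) σ hσ0 hσ1 (by positivity) hdeg with
    ⟨A', hA'A, hstab, hcard⟩ | ⟨l, A', hA'A, hl, hdeg', hcard⟩
  · exfalso
    have h1 : t ^ (-η) / (1 - σ) ≤ 1 / 2 := by
      have h0 : 0 < 1 - σ := by linarith
      rw [div_le_iff₀ h0] at htσ
      rw [Real.rpow_neg ht0.le, div_le_iff₀ h0, inv_le_iff_one_le_mul₀ (by positivity)]
      linarith
    have h2 : t * w / 2 ≤ A'.card := by
      have h3 : t ^ (-η) / (1 - σ) * A.card ≤ 1 / 2 * A.card := by gcongr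
      rw [hA] at h3 hcard
      linarith
    have hne : A'.Nonempty := by
      rw [← Finset.card_pos]
      have : (0 : ℝ) < A'.card := lt_of_lt_of_le (by positivity) h2
      exact_mod_cast this
    have h3 := hG.1 A' (isCograph_induce_of_stable hne hstab)
    rw [hn, Real.mul_rpow (by positivity) (by positivity), ← Real.rpow_mul ht0.le] at h3
    have h4 : t ^ (d * τ) ≤ t ^ ((1 : ℝ) / 2) :=
      Real.rpow_le_rpow_of_exponent_le (by linarith) (by linarith)
    have h5 : w ^ τ ≤ w := by
      simpa using Real.rpow_le_rpow_of_exponent_le hw hτ1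
    have h6 : t * w / 2 < t ^ ((1 : ℝ) / 2) * w :=
      (h2.trans_lt h3).trans_le (by gcongr)
    rw [← Real.sqrt_eq_rpow] at h6
    have h7 : t / 2 < Real.sqrt t := by
      refine lt_of_mul_lt_mul_right ?_ (by linarith : (0 : ℝ) ≤ w)
      linarith
    have h8 := Real.sq_sqrt ht0.le
    have h9 : 4 ≤ Real.sqrt t := Real.le_sqrt_of_sq_le (by linarith)
    nlinarith
  · set Δ := w / 2 ^ l with hΔ
    set T := 2 ^ l * t with hT
    have hpow : (1 : ℝ) ≤ 2 ^ l := one_le_pow₀ one_le_two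
    have hΔ0 : 0 < Δ := by positivity
    have htT : t ≤ T := by rw [hT]; nlinarith
    have hT0 : 0 < T := by linarith
    have hTΔ : t * w = T * Δ := by rw [hT, hΔ]; field_simp
    have hκ : t ^ (-η) * σ ^ l = T ^ (-η) := by
      rw [hT, Real.mul_rpow (by positivity) ht0.le, hσ, ← Real.rpow_natCast, ← Real.rpow_mul
        (by norm_num), mul_comm (-η), Real.rpow_mul (by norm_num), Real.rpow_natCast, mul_comm]
    rw [hκ, hA, hTΔ] at hcard
    set S := A'.filter fun x => Δ / 2 < ((nbrsIn G A' x).card : ℝ) with hS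
    set M := T * Δ * T ^ (-(2 * η)) with hM
    have hTη2 : 32 ≤ T ^ (η / 2) := htη.trans (by gcongr)
    have hTη : T ^ η = T ^ (η / 2) * T ^ (η / 2) := by rw [← Real.rpow_add hT0]; ring_nf
    obtain ⟨b, hbS, hb⟩ : ∃ b ∈ S, M < ((twoBall G A' b).card : ℝ) := by
      by_contra! hsmall
      set m := ⌊T ^ η / 4⌋₊ with hm
      have hm1 : (m : ℝ) ≤ T ^ η / 4 := Nat.floor_le (by positivity)
      have hm2 : T ^ η / 8 ≤ m := by
        have := Nat.lt_floor_add_one (T ^ η / 4)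
        rw [← hm] at this
        nlinarith
      have hm0 : 0 < m := by
        have : (0 : ℝ) < m := lt_of_lt_of_le (by positivity) hm2
        exact_mod_cast this
      have h1 := hG.mul_rpow_lt_of_twoBall_le hτ A' S Δ M hΔ0 (Finset.filter_subset _ _) hdeg'
        (fun x hx => (Finset.mem_filter.1 hx).2) hsmall m hm0 (by
          refine le_trans ?_ hcard
          have h2 : T ^ η * T ^ (-(2 * η)) = T ^ (-η) := by
            rw [← Real.rpow_add hT0]; ring_nf
          calc 4 * m * M ≤ 4 * (T ^ η / 4) * M := by gcongr
            _ = (T ^ η * T ^ (-(2 * η))) * (T * Δ) := by rw [hM]; ring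
            _ = _ := by rw [h2]) (by positivity)
      have hnT : (Fintype.card V : ℝ) ≤ T ^ d * Δ := by
        have h2 : t ^ d = t ^ (d - 1) * t := by
          rw [← Real.rpow_add_one ht0.ne']; ring_nf
        have h3 : T ^ d = T ^ (d - 1) * T := by
          rw [← Real.rpow_add_one hT0.ne']; ring_nf
        rw [hn, h2, h3, mul_assoc, mul_assoc, hTΔ]
        gcongr
        linarith
      have h2 : (Fintype.card V : ℝ) ^ τ ≤ T ^ (η / 2) * Δ ^ τ := by
        calc _ ≤ (T ^ d * Δ) ^ τ := by gcongr
          _ = T ^ (d * τ) * Δ ^ τ := by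
            rw [Real.mul_rpow (by positivity) hΔ0.le, ← Real.rpow_mul hT0.le]
          _ ≤ _ := by
            gcongr
            linarith
      have h3 : (Δ / 4) ^ τ ≥ Δ ^ τ / 4 := by
        rw [Real.div_rpow hΔ0.le (by norm_num)]
        have : (4 : ℝ) ^ τ ≤ 4 := by
          simpa using Real.rpow_le_rpow_of_exponent_le (by norm_num : (1 : ℝ) ≤ 4) hτ1
        gcongr
      have h4 : T ^ η / 8 * (Δ ^ τ / 4) ≤ m * (Δ / 4) ^ τ := by gcongr
      have h5 : T ^ η / 32 * Δ ^ τ < T ^ (η / 2) * Δ ^ τ := by linarith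
      have h6 := lt_of_mul_lt_mul_right h5 (by positivity)
      rw [hTη] at h6
      nlinarith
    have hbA' : b ∈ A' := Finset.filter_subset _ _ hbS
    set X := nbrsIn G A' b with hX
    set Y := twoBall G A' b \ X with hY
    have hM' : M = Δ * T ^ (1 - 2 * η) := by
      rw [hM, sub_eq_add_neg, Real.rpow_add hT0, Real.rpow_one]; ring
    have hT2 : 2 ≤ T ^ (1 - 2 * η) := by
      have h1 : T ^ ((1 : ℝ) / 2) ≤ T ^ (1 - 2 * η) :=
        Real.rpow_le_rpow_of_exponent_le (by linarith) (by linarith)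
      refine le_trans ?_ h1
      rw [← Real.sqrt_eq_rpow]
      exact Real.le_sqrt_of_sq_le (by linarith)
    have hYcard : M / 2 ≤ Y.card := by
      have h1 : ((Y.card : ℝ)) + X.card = (twoBall G A' b).card := by
        exact_mod_cast Finset.card_sdiff_add_card_eq_card Finset.subset_union_left
      have h2 : (X.card : ℝ) ≤ Δ := hdeg' b hbA'
      have h3 : Δ * 2 ≤ Δ * T ^ (1 - 2 * η) := by gcongr
      linarith
    have hYA' : Y ⊆ A' := by
      refine Finset.sdiff_subset.trans (Finset.union_subset (Finset.filter_subset _ _) ?_)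
      exact Finset.biUnion_subset.2 fun _ _ => Finset.filter_subset _ _
    have hXA' : X ⊆ A' := Finset.filter_subset _ _
    have hYne : Y.Nonempty := by
      rw [← Finset.card_pos]
      have : (0 : ℝ) < Y.card := lt_of_lt_of_le (by positivity) hYcard
      exact_mod_cast this
    have hdegY : ∀ x ∈ X, ((nbrsIn G Y x).card : ℝ) ≤ Δ := by
      intro x hx
      refine le_trans ?_ (hdeg' x (hXA' hx))
      exact_mod_cast Finset.card_le_card (Finset.filter_subset_filter _ hYA')
    obtain ⟨l', I, hIX, hl', hpriv, hI⟩ := exists_comb_of_cover G X Y Δ σ hΔ0 hσ0 hdegY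
      (fun y hy => by
        rw [hY, Finset.mem_sdiff] at hy
        rcases Finset.mem_union.1 hy.1 with h | h
        · exact absurd h hy.2
        · obtain ⟨x, hx, hxy⟩ := Finset.mem_biUnion.1 h
          exact ⟨x, hx, (Finset.mem_filter.1 hxy).2⟩) hYne
    set Q : ℝ := 2 ^ l' with hQ
    have hQ1 : 1 ≤ Q := one_le_pow₀ one_le_two
    have hQ0 : 0 < Q := by linarith
    refine ⟨b, hA'A hbA', I, (hIX.trans hXA').trans hA'A, Y, hYA'.trans hA'A, 64 * Q * T,
      fun i hi => (Finset.mem_filter.1 (hIX hi)).2, fun y hy hadj => ?_, ?_, ?_,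
      fun i hi => ?_, ?_⟩
    · exact (Finset.mem_sdiff.1 hy).2 (Finset.mem_filter.2 ⟨hYA' hy, hadj⟩)
    · refine htT.trans (le_mul_of_one_le_left hT0.le ?_)
      linarith
    · rw [le_div_iff₀ hQ0, one_mul] at hl'
      rw [hTΔ]
      calc 64 * Q * T ≤ 64 * Δ * T := by gcongr
        _ = 64 * (T * Δ) := by ring
    · refine le_trans (le_of_eq ?_) (hpriv i hi)
      rw [hTΔ]
      field_simp
    · have hσQ : σ ^ l' = Q ^ (-η) := by
        rw [hσ, hQ, ← Real.rpow_natCast, ← Real.rpow_mul (by norm_num), mul_comm (-η),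
          Real.rpow_mul (by norm_num), Real.rpow_natCast]
      have h1 : (1 - σ) * Q ^ (-η) * (Δ * T ^ (1 - 2 * η) / 2) ≤ 64 * (Δ / Q) * I.card := by
        rw [← hM', ← hσQ]
        refine le_trans ?_ hI
        have : 0 < 1 - σ := by linarith
        gcongr
      have h2 : Q ^ (1 - 2 * η) ≤ Q * Q ^ (-η) := by
        rw [← Real.rpow_one_add' hQ0.le (by linarith)]
        exact Real.rpow_le_rpow_of_exponent_le hQ1 (by linarith)
      have h3 : (64 * Q * T) ^ (1 - 2 * η) ≤ 64 * (Q * Q ^ (-η)) * T ^ (1 - 2 * η) := by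
        rw [Real.mul_rpow (by positivity) hT0.le, Real.mul_rpow (by norm_num) hQ0.le]
        have : (64 : ℝ) ^ (1 - 2 * η) ≤ 64 := by
          simpa using Real.rpow_le_rpow_of_exponent_le (by norm_num : (1 : ℝ) ≤ 64)
            (by linarith : 1 - 2 * η ≤ 1)
        gcongr
      have h4 : (1 - σ) * (Q * Q ^ (-η)) * T ^ (1 - 2 * η) ≤ 128 * I.card := by
        refine le_of_mul_le_mul_left ?_ (by positivity : 0 < Δ / (2 * Q))
        calc _ = (1 - σ) * Q ^ (-η) * (Δ * T ^ (1 - 2 * η) / 2) := by field_simp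
          _ ≤ _ := h1
          _ = _ := by field_simp; ring
      have h5 : 0 < 1 - σ := by linarith
      calc _ ≤ (1 - σ) / 8192 * (64 * (Q * Q ^ (-η)) * T ^ (1 - 2 * η)) := by gcongr
        _ = (1 - σ) * (Q * Q ^ (-η)) * T ^ (1 - 2 * η) / 128 := by ring
        _ ≤ _ := by linarith

/-- The numerical trade-off between the number `s` of teeth of a comb and the parameter `U`
measuring its width. -/
lemma comb_width_bounds {d c t w U s : ℝ} (hd : 2 ≤ d) (hc : 0 < c) (ht : 16 ≤ t)
    (htc : 2 / c ≤ t ^ ((1 : ℝ) / 2)) (htc2 : 1 / c ^ 2 ≤ t ^ ((1 : ℝ) / 2)) (hw : 1 ≤ w)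
    (htU : t ≤ U) (hUw : U ≤ 64 * (t * w)) (hs : c * U ^ (1 - 1 / (12 * d)) ≤ s)
    (hlong : 2 * t ^ (2 * d) ≤ t ^ d * w → 2 * t ^ d < s → t * w / U < t ^ d * w / s ^ 2) :
    U ^ (1 / (12 * d)) ≤ t ^ ((1 : ℝ) / 4) ∧
      t ^ d * w / t ^ (2 * d + 2) ≤ ⌈t * w / U / (2 * t)⌉₊ := by
  have ht0 : 0 < t := by linarith
  have ht1 : 1 ≤ t := by linarith
  have hU0 : 0 < U := by linarith
  have hw0 : 0 < w := by linarith
  set ε := 1 / (12 * d) with hε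
  have hεd : ε * d = 1 / 12 := by rw [hε]; field_simp
  have hε0 : 0 < ε := by positivity
  have hεle : ε ≤ 1 / 24 := by nlinarith
  have hs0 : 0 < s := lt_of_lt_of_le (by positivity) hs
  have hsuff : U ≤ t ^ (3 * d) → U ^ ε ≤ t ^ ((1 : ℝ) / 4) := by
    intro h
    calc U ^ ε ≤ (t ^ (3 * d)) ^ ε := by gcongr
      _ = t ^ (3 * d * ε) := (Real.rpow_mul ht0.le _ _).symm
      _ = _ := by congr 1; linarith
  have ht2d : t ^ (2 * d) = t ^ d * t ^ d := by rw [← Real.rpow_add ht0]; ring_nf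
  have ht2d2 : t ^ (2 * d + 2) = t ^ (2 * d) * t ^ 2 := by
    rw [Real.rpow_add ht0]; norm_num
  have htd : t ^ 2 ≤ t ^ d := by
    rw [← Real.rpow_natCast]
    exact Real.rpow_le_rpow_of_exponent_le ht1 (by exact_mod_cast hd)
  have htd0 : 0 < t ^ d := by positivity
  rcases lt_or_ge (t ^ d * w) (2 * t ^ (2 * d)) with hcase | hcase
  · refine ⟨hsuff ?_, ?_⟩
    · have h1 : t ^ (3 * d) = t ^ (2 * d) * t ^ d := by rw [← Real.rpow_add ht0]; ring_nf
      have h2 : t * w ≤ t ^ d * w := by gcongr; nlinarith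
      rw [h1]
      have h3 : 256 ≤ t ^ d := by nlinarith
      nlinarith [show 0 < t ^ (2 * d) by positivity]
    · have h1 : 1 ≤ ⌈t * w / U / (2 * t)⌉₊ := Nat.ceil_pos.2 (by positivity)
      have h2 : (1 : ℝ) ≤ ⌈t * w / U / (2 * t)⌉₊ := by exact_mod_cast h1
      refine le_trans ?_ h2
      rw [ht2d2, div_le_one (by positivity)]
      refine hcase.le.trans ?_
      rw [mul_comm]
      gcongr
      nlinarith
  · have hUle : ∀ x y : ℝ, 0 < x → y ≤ (d + 1) * x → U ^ x ≤ t ^ y → U ≤ t ^ (d + 1) := by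
      intro x y hx hy h
      by_contra! hlt
      have h1 : (t ^ (d + 1)) ^ x < U ^ x := Real.rpow_lt_rpow (by positivity) hlt hx
      rw [← Real.rpow_mul ht0.le] at h1
      have h2 : t ^ y ≤ t ^ ((d + 1) * x) := Real.rpow_le_rpow_of_exponent_le ht1 hy
      linarith
    have htd1 : t ^ (d + 1) = t ^ d * t := Real.rpow_add_one ht0.ne' d
    have hshort : s ≤ 2 * t ^ d := by
      by_contra! hlt
      have h1 := hlong hcase hlt
      rw [div_lt_div_iff₀ hU0 (by positivity)] at h1
      have h2 : s ^ 2 * t < t ^ d * U := by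
        refine lt_of_mul_lt_mul_right ?_ hw0.le
        linarith
      have h3 : (c * U ^ (1 - ε)) ^ 2 ≤ s ^ 2 := by gcongr
      have h4 : (U ^ (1 - ε)) ^ 2 = U ^ (1 - 2 * ε) * U := by
        rw [← Real.rpow_add_one hU0.ne', ← Real.rpow_natCast, ← Real.rpow_mul hU0.le]
        congr 1
        push_cast
        ring
      have h5 : t ^ d = t ^ (d - 1 / 2) * t ^ ((1 : ℝ) / 2) := by
        rw [← Real.rpow_add ht0]; ring_nf
      have h5' : t ^ ((1 : ℝ) / 2) * t ^ ((1 : ℝ) / 2) = t := by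
        rw [← Real.rpow_add ht0]; norm_num
      have h6 : U ≤ t ^ (d + 1) := by
        refine hUle (1 - 2 * ε) (d - 1 / 2) (by linarith) (by linarith) ?_
        rw [mul_pow, h4] at h3
        have h7 : c ^ 2 * U ^ (1 - 2 * ε) * t ≤ t ^ d := by
          refine le_of_mul_le_mul_right ?_ hU0
          calc _ = c ^ 2 * (U ^ (1 - 2 * ε) * U) * t := by ring
            _ ≤ s ^ 2 * t := by gcongr
            _ ≤ _ := h2.le
        rw [div_le_iff₀ (by positivity)] at htc2
        set r := t ^ ((1 : ℝ) / 2) with hr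
        have hr0 : 0 < r := by positivity
        refine le_of_mul_le_mul_right ?_ hr0
        rw [← h5]
        refine le_trans ?_ h7
        rw [← h5']
        have h8 : 0 ≤ U ^ (1 - 2 * ε) * r := by positivity
        nlinarith
      rw [htd1] at h6
      have h7 : t ^ d * U ≤ t ^ d * (t ^ d * t) := by gcongr
      have h8 : s ^ 2 < t ^ d * t ^ d := by
        refine lt_of_mul_lt_mul_right ?_ ht0.le
        linarith
      nlinarith
    have hU : U ≤ t ^ (d + 1) := by
      refine hUle (1 - ε) (d + 1 / 2) (by linarith) (by linarith) ?_
      have h1 : U ^ (1 - ε) ≤ 2 / c * t ^ d := by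
        rw [div_mul_eq_mul_div, le_div_iff₀ hc]
        linarith
      refine h1.trans ?_
      rw [Real.rpow_add ht0, mul_comm]
      gcongr
    refine ⟨hsuff (hU.trans (Real.rpow_le_rpow_of_exponent_le ht1 (by linarith))), ?_⟩
    refine le_trans ?_ (Nat.le_ceil _)
    have h1 : t * w / U / (2 * t) = w / (2 * U) := by field_simp
    rw [htd1] at hU
    rw [h1, ht2d2, ht2d, div_le_div_iff₀ (by positivity) (by positivity)]
    calc t ^ d * w * (2 * U) ≤ t ^ d * w * (t * (t ^ d * t)) := by
          gcongr
          linarith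
      _ = w * (t ^ d * t ^ d * t ^ 2) := by ring

/-- Choosing for each `j ∈ J` some private neighbours of `r j` in the block `A j` yields a comb
whose blocks form an equicardinal minor of `A`. -/
lemma exists_isCombIn_of_privateNbrs {V : Type} (G : SimpleGraph V) {t : ℕ}
    (A : Fin t → Finset V) (b : V) (I Y : Finset V) (hIb : ∀ i ∈ I, G.Adj b i)
    (hYb : ∀ y ∈ Y, ¬ G.Adj b y) (hIA : ∀ i ∈ I, ∃ j, i ∈ A j) (J : Finset (Fin t))
    (r : Fin t → V) (hr : Set.InjOn r J) (hrI : ∀ j ∈ J, r j ∈ I) (κ : ℕ)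
    (hκ : ∀ j ∈ J, κ ≤ (privateNbrs G I Y (r j) ∩ A j).card) (m : ℝ) (hm : m ≤ κ) :
    ∃ (as : Fin J.card → V) (A' : Fin J.card → Finset V) (g : Fin J.card → Fin t),
      IsCombIn G as A' m {x | (∃ i, x ∈ A i) ∧ G.Adj b x} {x | (∃ i, x ∈ A i) ∧ ¬ G.Adj b x} ∧
      StrictMono g ∧ (∀ j, A' j ⊆ A (g j)) ∧ ∀ j, (A' j).card = κ := by
  set g := J.orderEmbOfFin rfl with hg
  have hgJ : ∀ j, g j ∈ J := fun j => J.orderEmbOfFin_mem rfl j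
  choose A' hA' hcard using fun j => Finset.exists_subset_card_eq (hκ (g j) (hgJ j))
  have hpriv : ∀ j, ∀ x ∈ A' j, x ∈ Y ∧ G.Adj (r (g j)) x ∧
      ∀ i ∈ I, i ≠ r (g j) → ¬ G.Adj i x := fun j x hx =>
    mem_privateNbrs.1 (Finset.mem_inter.1 (hA' j hx)).1
  have hA'A : ∀ j, A' j ⊆ A (g j) := fun j => (hA' j).trans Finset.inter_subset_right
  have hinj : Function.Injective fun j => r (g j) := fun i j hij =>
    g.injective (hr (hgJ i) (hgJ j) hij)
  have hnadj : ∀ i j, i ≠ j → ∀ x ∈ A' j, ¬ G.Adj (r (g i)) x := fun i j hij x hx =>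
    (hpriv j x hx).2.2 _ (hrI _ (hgJ i)) (hinj.ne hij)
  refine ⟨fun j => r (g j), A', g, ⟨?_, hinj, ?_, ?_, ?_, ?_, ?_, hnadj, ?_⟩, g.strictMono,
    hA'A, hcard⟩
  · exact Set.disjoint_left.2 fun x hx hx' => hx'.2 hx.2
  · exact fun j => ⟨hIA _ (hrI _ (hgJ j)), hIb _ (hrI _ (hgJ j))⟩
  · exact fun j x hx => ⟨⟨g j, hA'A j hx⟩, hYb x (hpriv j x hx).1⟩
  · exact fun i j hij => Finset.disjoint_left.2 fun x hx hx' =>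
      hnadj i j hij x hx' (hpriv i x hx).2.1
  · exact fun i j hx => hYb _ (hpriv j _ hx).1 (hIb _ (hrI _ (hgJ i)))
  · exact fun j x hx => (hpriv j x hx).2.1
  · intro j
    rw [hcard]
    exact hm

end Combs

/-- Main lemma. Given `k ≥ 2` and a real `d ≥ 2`, there are `τ₀ = τ₀(k,d) > 0` and a
positive integer `L₀ = L₀(k,d)` such that: for every `0 < τ < τ₀`, every strongly
`(k choose 2)`-free `τ`-critical graph `G`, and every equicardinal blockade
`𝓐 = (A i : i < t)` in `G` of width exactly `|G|/t^d`, with `|G|/t^{2d} ≤ W_G`,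
`L₀ ≤ t ≤ 2|G|^{1/d}`, and such that every vertex of the union `A` has fewer than
`|G|/t^d` neighbours in `A`, there exist `b ∈ A`, an integer `t' ≥ t^{1/8}` and a
`(t', |G|/t^{2d+2})`-comb `((a j, A' j) : j < t')` in `(E_b ∩ A, ¬E_b ∩ A)` such that
`(A' j : j < t')` is an equicardinal minor of `𝓐` of width at least `|G|/t^{2d+2}`. -/
theorem main_lemma (k : ℕ) (hk : 2 ≤ k) (d : ℝ) (hd : 2 ≤ d) :
    ∃ (τ₀ : ℝ) (L₀ : ℕ), 0 < τ₀ ∧ 0 < L₀ ∧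
      ∀ (V : Type) (_ : Fintype V) (G : SimpleGraph V) (τ : ℝ) (t : ℕ)
        (A : Fin t → Finset V),
        0 < τ → τ < τ₀ →
        StronglyKC2Free G k → TauCritical τ G →
        IsBlockade A →
        (∀ i, ((A i).card : ℝ) = (Fintype.card V : ℝ) / (t : ℝ) ^ d) →
        (Fintype.card V : ℝ) / (t : ℝ) ^ (2 * d) ≤ (WG G : ℝ) →
        L₀ ≤ t → (t : ℝ) ≤ 2 * (Fintype.card V : ℝ) ^ (1 / d) →
        (∀ a, (∃ i, a ∈ A i) →
          ((({x | (∃ i, x ∈ A i) ∧ G.Adj a x} : Set V).ncard : ℝ)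
            < (Fintype.card V : ℝ) / (t : ℝ) ^ d)) →
        ∃ (b : V) (t' : ℕ) (as : Fin t' → V) (A' : Fin t' → Finset V)
          (g : Fin t' → Fin t),
          (∃ i, b ∈ A i) ∧
          (t : ℝ) ^ ((1 : ℝ) / 8) ≤ (t' : ℝ) ∧
          IsCombIn G as A' ((Fintype.card V : ℝ) / (t : ℝ) ^ (2 * d + 2))
            {x | (∃ i, x ∈ A i) ∧ G.Adj b x} {x | (∃ i, x ∈ A i) ∧ ¬ G.Adj b x} ∧
          StrictMono g ∧ (∀ j, A' j ⊆ A (g j)) ∧ (∀ j, (A' j).Nonempty) ∧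
          (∀ i j, (A' i).card = (A' j).card) ∧
          (∀ j, (Fintype.card V : ℝ) / (t : ℝ) ^ (2 * d + 2) ≤ ((A' j).card : ℝ)) := by
  classical
  have hd0 : 0 < d := by linarith
  set η := 1 / (24 * d) with hη
  have hη0 : 0 < η := by positivity
  have hηd : η * d = 1 / 24 := by rw [hη]; field_simp
  have hη4 : η ≤ 1 / 48 := by nlinarith
  have h2η : 1 - 1 / (12 * d) = 1 - 2 * η := by rw [hη]; field_simp; ring
  set c : ℝ := (1 - (2 : ℝ) ^ (-η)) / 8192 with hc
  have hc0 : 0 < c := by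
    have : (2 : ℝ) ^ (-η) < 1 := Real.rpow_lt_one_of_one_lt_of_neg one_lt_two (by linarith)
    exact div_pos (by linarith) (by norm_num)
  have hlarge : ∀ p K : ℝ, 0 < p → ∀ᶠ t : ℕ in Filter.atTop, K ≤ (t : ℝ) ^ p := fun p K hp =>
    ((tendsto_rpow_atTop hp).comp tendsto_natCast_atTop_atTop).eventually_ge_atTop K
  obtain ⟨L, hL⟩ := Filter.eventually_atTop.1 ((hlarge (η / 2) 32 (by positivity)).and
    ((hlarge η (2 / (1 - (2 : ℝ) ^ (-η))) hη0).and ((hlarge (1 / 2) (2 / c) (by norm_num)).and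
    ((hlarge (1 / 2) (1 / c ^ 2) (by norm_num)).and (hlarge (5 / 8) (3 / c) (by norm_num))))))
  refine ⟨η / (2 * d), max L 16, by positivity, by positivity, ?_⟩
  intro V _ G τ t A hτ hττ _ hG hblock hcard hWG htL _ hdeg
  obtain ⟨h32, hσ, hc2, hc22, hc3⟩ := hL t ((le_max_left _ _).trans htL)
  have ht16 : (16 : ℝ) ≤ t := by exact_mod_cast (le_max_right _ _).trans htL
  have ht0 : (0 : ℝ) < t := by linarith
  have htpos : 0 < t := by exact_mod_cast ht0
  have hτη : d * τ ≤ η / 2 := by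
    rw [lt_div_iff₀ (by positivity)] at hττ
    linarith
  obtain ⟨v, hv⟩ := hblock.1 ⟨0, htpos⟩
  have : Nonempty V := ⟨v⟩
  set w := (A ⟨0, htpos⟩).card with hw
  have htd : (0 : ℝ) < (t : ℝ) ^ d := by positivity
  have hw1 : 1 ≤ w := Finset.card_pos.2 ⟨v, hv⟩
  have hw1' : (1 : ℝ) ≤ w := by exact_mod_cast hw1
  have hwn : (Fintype.card V : ℝ) / (t : ℝ) ^ d = w := (hcard _).symm
  have hn : (Fintype.card V : ℝ) = (t : ℝ) ^ d * w := by
    rw [← hwn]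
    field_simp
  have hAw : ∀ j, (A j).card = w := fun j => by
    have := hcard j
    rw [hwn] at this
    exact_mod_cast this
  set U₀ := Finset.univ.biUnion A with hU₀
  have hmemU : ∀ x, x ∈ U₀ ↔ ∃ i, x ∈ A i := by simp [hU₀]
  have hU₀card : (U₀.card : ℝ) = t * w := by
    have : U₀.card = t * w := by
      rw [hU₀, Finset.card_biUnion fun i _ j _ hij => hblock.2 i j hij]
      simp [hAw]
    exact_mod_cast this
  have hdegU : ∀ x ∈ U₀, ((nbrsIn G U₀ x).card : ℝ) ≤ w := by
    intro x hx
    have h := hdeg x ((hmemU x).1 hx)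
    rw [hwn] at h
    have hset : {y | (∃ i, y ∈ A i) ∧ G.Adj x y} = (nbrsIn G U₀ x : Set V) := by
      ext y
      simp [nbrsIn, hmemU]
    rw [hset, Set.ncard_coe_finset] at h
    exact h.le
  obtain ⟨b, hb, I, hIU, Y, hYU, U, hIb, hYb, htU, hUw, hpriv, hIcard⟩ :=
    hG.exists_large_comb hτ d η t w hd hη0 (by linarith) hτη ht16 h32 hσ hw1' hn U₀ hU₀card hdegU
  rw [← h2η] at hIcard
  have hUpos : 0 < U := by linarith
  have hI0 : (0 : ℝ) < I.card := lt_of_lt_of_le (by positivity) hIcard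
  have hIne : I.Nonempty := Finset.card_pos.1 (by exact_mod_cast hI0)
  obtain ⟨hUε, hwidth⟩ := comb_width_bounds hd hc0 ht16 hc2 hc22 hw1' htU hUw hIcard (by
    intro hlong hI
    by_contra! hle
    have h1 := WG_le_of_comb G b I Y hIne hIb hYb (fun i hi => by
      rw [hn]
      exact hle.trans (hpriv i hi))
    have h2 : (WG G : ℝ) < (Fintype.card V : ℝ) / (I.card : ℝ) ^ 2 + 1 :=
      lt_of_le_of_lt (by exact_mod_cast h1) (Nat.ceil_lt_add_one (by positivity))
    have ht2d : (t : ℝ) ^ (2 * d) = (t : ℝ) ^ d * (t : ℝ) ^ d := by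
      rw [← Real.rpow_add ht0]; ring_nf
    have h3 : (Fintype.card V : ℝ) / (I.card : ℝ) ^ 2
        ≤ (Fintype.card V : ℝ) / (4 * (t : ℝ) ^ (2 * d)) := by
      gcongr
      rw [ht2d]
      calc 4 * ((t : ℝ) ^ d * (t : ℝ) ^ d) = (2 * (t : ℝ) ^ d) ^ 2 := by ring
        _ ≤ _ := by gcongr
    have h4 : 2 ≤ (Fintype.card V : ℝ) / (t : ℝ) ^ (2 * d) := by
      rw [le_div_iff₀ (by positivity), hn]
      exact hlong
    have h5 : (Fintype.card V : ℝ) / (4 * (t : ℝ) ^ (2 * d))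
        = (Fintype.card V : ℝ) / (t : ℝ) ^ (2 * d) / 4 := by
      rw [div_div, mul_comm 4]
    linarith)
  rw [← hn] at hwidth
  set β := (t : ℝ) * w / U with hβ
  have hβ0 : 0 < β := by positivity
  have hβw : β ≤ w := by
    rw [hβ, div_le_iff₀ hUpos, mul_comm]
    gcongr
  obtain ⟨J, r, hr, hrI, hrcard, hJ⟩ := exists_injOn_large_inter A w hAw I hIne
    (privateNbrs G I Y) β hβ0 hpriv
    (fun i _ y hy => (hmemU y).1 (hYU (mem_privateNbrs.1 hy).1))
    (by
      intro i hi j hj hij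
      exact Finset.disjoint_left.2 fun y hy hy' =>
        (mem_privateNbrs.1 hy').2.2 i hi hij (mem_privateNbrs.1 hy).2.1)
  have hκ0 : 0 < ⌈β / (2 * t)⌉₊ := Nat.ceil_pos.2 (by positivity)
  obtain ⟨as, A', g, hcomb, hg, hA'A, hA'card⟩ := exists_isCombIn_of_privateNbrs G A b I Y hIb hYb
    (fun i hi => (hmemU i).1 (hIU hi)) J r hr hrI ⌈β / (2 * t)⌉₊
    (fun j hj => Nat.ceil_le.2 (hrcard j hj)) _ hwidth
  refine ⟨b, J.card, as, A', g, (hmemU b).1 hb, ?_, hcomb, hg, hA'A, fun j => ?_, fun i j => ?_,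
    fun j => ?_⟩
  · have h1 : β * I.card ≤ 3 * w * J.card := hJ.trans (by gcongr; linarith)
    have h2 : (t : ℝ) * I.card ≤ 3 * U * J.card := by
      rw [hβ, div_mul_eq_mul_div, div_le_iff₀ hUpos] at h1
      refine le_of_mul_le_mul_right ?_ (by linarith : (0 : ℝ) < w)
      linarith
    have h3 : U = U ^ (1 - 1 / (12 * d)) * U ^ (1 / (12 * d)) := by
      rw [← Real.rpow_add hUpos]; simp
    have h4 : (t : ℝ) * c ≤ 3 * (t : ℝ) ^ ((1 : ℝ) / 4) * J.card := by
      refine le_of_mul_le_mul_right ?_ (by positivity : 0 < U ^ (1 - 1 / (12 * d)))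
      set P := U ^ (1 - 1 / (12 * d))
      calc (t : ℝ) * c * P = t * (c * P) := by ring
        _ ≤ t * I.card := by gcongr
        _ ≤ 3 * U * J.card := h2
        _ = 3 * (P * U ^ (1 / (12 * d))) * J.card := by rw [← h3]
        _ ≤ 3 * (P * (t : ℝ) ^ ((1 : ℝ) / 4)) * J.card := by
          have hP0 : 0 ≤ P := by positivity
          exact mul_le_mul_of_nonneg_right (mul_le_mul_of_nonneg_left
            (mul_le_mul_of_nonneg_left hUε hP0) (by norm_num)) (Nat.cast_nonneg _)
        _ = _ := by ring
    have h5 : (t : ℝ) = (t : ℝ) ^ ((5 : ℝ) / 8) * (t : ℝ) ^ ((1 : ℝ) / 8) *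
        (t : ℝ) ^ ((1 : ℝ) / 4) := by
      rw [← Real.rpow_add ht0, ← Real.rpow_add ht0]; norm_num
    rw [div_le_iff₀ hc0] at hc3
    refine le_of_mul_le_mul_left ?_ (by positivity : 0 < 3 * (t : ℝ) ^ ((1 : ℝ) / 4))
    calc 3 * (t : ℝ) ^ ((1 : ℝ) / 4) * (t : ℝ) ^ ((1 : ℝ) / 8)
        ≤ (t : ℝ) ^ ((5 : ℝ) / 8) * c * (t : ℝ) ^ ((1 : ℝ) / 4) * (t : ℝ) ^ ((1 : ℝ) / 8) := by
          gcongr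
      _ = (t : ℝ) ^ ((5 : ℝ) / 8) * (t : ℝ) ^ ((1 : ℝ) / 8) * (t : ℝ) ^ ((1 : ℝ) / 4) * c := by
          ring
      _ = t * c := by rw [← h5]
      _ ≤ _ := h4
  · rw [← Finset.card_pos, hA'card]
    exact hκ0
  · rw [hA'card, hA'card]
  · rw [hA'card]
    exact hwidth
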